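/- arXiv:1810.08900 — 2 statements merged into one kernel-verified Lean document; each statement's English description precedes it below -/
import Mathlib

section
/- Let ℓ > 0, E > 0, h > 0, κ > 0, −1 < ν < 1, and set D_b = E h³/(12(1 − ν²)), G = E/(2(1 + ν)), D_s = κ G h and α = 12 D_b / (D_s ℓ²). With w(s) = (1 − s/ℓ)w_i + (s/ℓ)w_j, β_s(s) = (1 − s/ℓ)β_i + (s/ℓ)β_j + 4(s/ℓ)(1 − s/ℓ)Δβ and the constant assumed shear strain γ̄ = −(4/(3κ(1 − ν)))(h/ℓ)²Δβ, the discrete shear constraint ∫₀^ℓ (w'(s) + β_s(s) − γ̄) ds = 0 holds if and only if (w_j − w_i) + (ℓ/2)(β_i + β_j) + (2/3)·ℓ·(1 + α)·Δβ = 0. -/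
/-- For `ℓ, E, h, κ > 0`, `−1 < ν < 1`, with `D_b = E h³/(12(1 − ν²))`,
`G = E/(2(1 + ν))`, `D_s = κ G h` and `α = 12 D_b/(D_s ℓ²)`, the discrete shear
constraint `∫₀^ℓ (w'(s) + β_s(s) − γ̄) ds = 0` — where
`w(s) = (1 − s/ℓ)w_i + (s/ℓ)w_j`,
`β_s(s) = (1 − s/ℓ)β_i + (s/ℓ)β_j + 4(s/ℓ)(1 − s/ℓ)Δβ` and
`γ̄ = −(4/(3κ(1 − ν)))(h/ℓ)²Δβ` — holds iff
`(w_j − w_i) + (ℓ/2)(β_i + β_j) + (2/3)ℓ(1 + α)Δβ = 0`. -/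
theorem discrete_shear_constraint_iff
    (ℓ E h κ ν : ℝ) (hℓ : 0 < ℓ) (hE : 0 < E) (hh : 0 < h) (hκ : 0 < κ)
    (hν₁ : -1 < ν) (hν₂ : ν < 1)
    (Db G Ds α : ℝ)
    (hDb : Db = E * h ^ 3 / (12 * (1 - ν ^ 2)))
    (hG : G = E / (2 * (1 + ν)))
    (hDs : Ds = κ * G * h)
    (hα : α = 12 * Db / (Ds * ℓ ^ 2))
    (wi wj βi βj Δβ γbar : ℝ)
    (hγ : γbar = -(4 / (3 * κ * (1 - ν))) * (h / ℓ) ^ 2 * Δβ) :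
    (∫ s in (0 : ℝ)..ℓ,
        (deriv (fun s : ℝ => (1 - s / ℓ) * wi + (s / ℓ) * wj) s
          + ((1 - s / ℓ) * βi + (s / ℓ) * βj + 4 * (s / ℓ) * (1 - s / ℓ) * Δβ)
          - γbar)) = 0
      ↔ (wj - wi) + (ℓ / 2) * (βi + βj) + (2 / 3) * ℓ * (1 + α) * Δβ = 0 := by
  have hℓ0 : ℓ ≠ 0 := hℓ.ne'
  have hd : ∀ s : ℝ, deriv (fun s : ℝ => (1 - s / ℓ) * wi + (s / ℓ) * wj) s = (wj - wi) / ℓ := by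
    intro s
    have h1 : HasDerivAt (fun s : ℝ => s / ℓ) (1 / ℓ) s := (hasDerivAt_id' s).div_const ℓ
    have h2 := ((h1.const_sub 1).mul_const wi).add (h1.mul_const wj)
    refine (HasDerivAt.deriv h2).trans ?_
    ring
  have hαv : α = 2 * h ^ 2 / (κ * (1 - ν) * ℓ ^ 2) := by
    have a1 : 1 + ν ≠ 0 := by linarith
    have a2 : 1 - ν ≠ 0 := by linarith
    have a3 : 1 - ν ^ 2 = (1 - ν) * (1 + ν) := by ring
    rw [hα, hDs, hG, hDb, a3]
    field_simp
  have key : (∫ s in (0 : ℝ)..ℓ,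
        (deriv (fun s : ℝ => (1 - s / ℓ) * wi + (s / ℓ) * wj) s
          + ((1 - s / ℓ) * βi + (s / ℓ) * βj + 4 * (s / ℓ) * (1 - s / ℓ) * Δβ)
          - γbar)) = (wj - wi) + (ℓ / 2) * (βi + βj) + (2 / 3) * ℓ * Δβ - γbar * ℓ := by
    simp only [hd]
    have hF : ∀ s ∈ Set.uIcc (0 : ℝ) ℓ, HasDerivAt
        (fun s : ℝ => ((wj - wi) / ℓ + βi - γbar) * s
          + ((βj - βi + 4 * Δβ) / (2 * ℓ)) * s ^ 2 - (4 * Δβ / (3 * ℓ ^ 2)) * s ^ 3)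
        ((wj - wi) / ℓ
          + ((1 - s / ℓ) * βi + (s / ℓ) * βj + 4 * (s / ℓ) * (1 - s / ℓ) * Δβ)
          - γbar) s := by
      intro s _
      have h1 := (((hasDerivAt_id' s).const_mul ((wj - wi) / ℓ + βi - γbar)).add
        ((hasDerivAt_pow 2 s).const_mul ((βj - βi + 4 * Δβ) / (2 * ℓ)))).sub
        ((hasDerivAt_pow 3 s).const_mul (4 * Δβ / (3 * ℓ ^ 2)))
      refine HasDerivAt.congr_deriv h1 ?_
      push_cast
      field_simp
      ring
    rw [intervalIntegral.integral_eq_sub_of_hasDerivAt hF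
      (Continuous.intervalIntegrable (by fun_prop) _ _)]
    field_simp
    ring
  have hγα : γbar * ℓ = -((2 / 3) * ℓ * α * Δβ) := by
    have a2 : 1 - ν ≠ 0 := by linarith
    rw [hγ, hαv]
    field_simp
    try ring
  rw [key, hγα]
  constructor <;> intro H <;> linarith
end

section
/- Fix E > 0, κ > 0, −1 < ν < 1, ℓ > 0 and nodal values w_i, w_j, β_i, β_j, and let g = (w_j − w_i) + (ℓ/2)(β_i + β_j). For thickness h > 0 set α(h) = 2h²/(κ(1 − ν)ℓ²), Δβ(h) = −(3/(2ℓ(1 + α(h))))·g and γ̄(h) = (α(h)/(1 + α(h)))·(g/ℓ). Then as h → 0⁺: (i) γ̄(h) → 0 with γ̄(h)/h² → 2g/(κ(1 − ν)ℓ³), and (ii) Δβ(h) → −(3/(2ℓ))·g, so in the limit the nodal values satisfy the discrete Kirchhoff constraint (w_j − w_i) + (ℓ/2)(β_i + β_j) + (2/3)ℓ·Δβ = 0 with Δβ = lim Δβ(h). In particular the influence of shear deformations vanishes with the thickness, so the formulation is free of shear locking at the edge level. -/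
open Filter Topology

/-- Shear-locking-free behaviour at the edge level: with
`α(h) = 2h²/(κ(1 − ν)ℓ²)`, `Δβ(h) = −(3/(2ℓ(1 + α(h))))·g` and
`γ̄(h) = (α(h)/(1 + α(h)))·(g/ℓ)` where `g = (w_j − w_i) + (ℓ/2)(β_i + β_j)`,
as `h → 0⁺`: (i) `γ̄(h) → 0` with `γ̄(h)/h² → 2g/(κ(1 − ν)ℓ³)`, and
(ii) `Δβ(h) → −(3/(2ℓ))·g`, and the limiting value satisfies the discrete
Kirchhoff constraint `(w_j − w_i) + (ℓ/2)(β_i + β_j) + (2/3)ℓ·Δβ = 0`. -/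
theorem shear_locking_free_limit
    (E κ ν ℓ wi wj βi βj g : ℝ)
    (hE : 0 < E) (hκ : 0 < κ) (hν₁ : -1 < ν) (hν₂ : ν < 1) (hℓ : 0 < ℓ)
    (hg : g = (wj - wi) + (ℓ / 2) * (βi + βj))
    (α Δβ γbar : ℝ → ℝ)
    (hα : ∀ h : ℝ, α h = 2 * h ^ 2 / (κ * (1 - ν) * ℓ ^ 2))
    (hΔβ : ∀ h : ℝ, Δβ h = -(3 / (2 * ℓ * (1 + α h))) * g)
    (hγ : ∀ h : ℝ, γbar h = (α h / (1 + α h)) * (g / ℓ)) :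
    Tendsto γbar (𝓝[>] (0 : ℝ)) (𝓝 0) ∧
    Tendsto (fun h : ℝ => γbar h / h ^ 2) (𝓝[>] (0 : ℝ))
      (𝓝 (2 * g / (κ * (1 - ν) * ℓ ^ 3))) ∧
    Tendsto Δβ (𝓝[>] (0 : ℝ)) (𝓝 (-(3 / (2 * ℓ)) * g)) ∧
    (wj - wi) + (ℓ / 2) * (βi + βj) + (2 / 3) * ℓ * (-(3 / (2 * ℓ)) * g) = 0 := by
  have hν : 0 < 1 - ν := by linarith
  have hα0 : Tendsto α (𝓝[>] (0 : ℝ)) (𝓝 0) := by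
    have hc : Continuous α := by
      rw [funext hα]
      fun_prop
    have h0 : α 0 = 0 := by simp [hα]
    have h1 := hc.tendsto 0
    rw [h0] at h1
    exact h1.mono_left nhdsWithin_le_nhds
  have hinv : Tendsto (fun h => (1 + α h)⁻¹) (𝓝[>] (0 : ℝ)) (𝓝 1) := by
    have h1 := (hα0.const_add 1).inv₀ (by norm_num)
    simpa using h1
  refine ⟨?_, ?_, ?_, ?_⟩
  · have h1 := (hα0.mul hinv).mul_const (g / ℓ)
    rw [zero_mul, zero_mul] at h1
    refine h1.congr fun h => ?_
    rw [hγ h, div_eq_mul_inv (α h)]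
  · have h1 := hinv.const_mul (2 * g / (κ * (1 - ν) * ℓ ^ 3))
    rw [mul_one] at h1
    refine h1.congr' ?_
    filter_upwards [self_mem_nhdsWithin] with h hh
    have hh' : 0 < h := hh
    have hpos : 0 < 1 + α h := by
      rw [hα h]
      positivity
    have e : γbar h / h ^ 2 = (α h / h ^ 2) * (g / ℓ) * (1 + α h)⁻¹ := by
      rw [hγ h]
      ring
    have e2 : α h / h ^ 2 * (g / ℓ) = 2 * g / (κ * (1 - ν) * ℓ ^ 3) := by
      rw [hα h]
      field_simp
    rw [e, e2]
  · have h1 := hinv.const_mul (-(3 / (2 * ℓ)) * g)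
    rw [mul_one] at h1
    refine h1.congr fun h => ?_
    rw [hΔβ h, div_eq_mul_inv, div_eq_mul_inv, mul_inv (2 * ℓ)]
    ring
  · rw [← hg]
    field_simp
    ring
end
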